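/- arXiv:1910.12341 — 2 statements merged into one kernel-verified Lean document; each statement's English description precedes it below -/
import Mathlib

section
/- Let $X$ be a standard Borel space with a Borel probability measure $\mu$ and let $T: X \to X$ be a $\mu$-measurable map preserving $\mu$ (i.e. $T_*\mu = \mu$). Let $Y$ be a Polish space and let $S: Y \to Y$ be a continuous map. Let $p: Y \to X$ be a Borel map such that $p \circ S = T \circ p$ and $\mu(p(Y)) = 1$. Suppose that for $\mu$-almost all $x \in X$ the fiber $p^{-1}(x)$ is compact. Then there exists a Borel probability measure $\nu$ on $Y$ which is $S$-invariant (i.e. $S_*\nu = \nu$) and satisfies $p_*\nu = \mu$. -/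
open MeasureTheory
open Set Filter Topology
open scoped ENNReal

theorem exists_bound_measure_image_lt {X : Type*} [MeasurableSpace X] (μ : Measure X)
    (f : (ℕ → ℕ) → X) {c : ℝ≥0∞} (hc : c < μ (range f)) :
    ∃ k : ℕ → ℕ, ∀ n, c < μ (f '' {x | ∀ i < n, x i ≤ k i}) := by
  have step (n : ℕ) (P : {P : Set (ℕ → ℕ) // c < μ (f '' P)}) :
      ∃ j, c < μ (f '' (P ∩ {x | x n ≤ j})) := by
    have hmono : Monotone fun j => f '' (P ∩ {x | x n ≤ j}) := fun i j hij =>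
      image_mono (inter_subset_inter_right _ fun x (hx : x n ≤ i) => hx.trans hij)
    have hU : ⋃ j, f '' (P ∩ {x | x n ≤ j}) = f '' P := by
      rw [← image_iUnion, ← inter_iUnion, iUnion_eq_univ_iff.2 fun x => ⟨x n, mem_ofPred.2 le_rfl⟩, inter_univ]
    have h := P.2
    rw [← hU, hmono.measure_iUnion] at h
    exact lt_iSup_iff.1 h
  choose j hj using step
  let P : ℕ → {P : Set (ℕ → ℕ) // c < μ (f '' P)} :=
    Nat.rec ⟨univ, by rwa [image_univ]⟩ fun n P => ⟨P ∩ {x | x n ≤ j n P}, hj n P⟩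
  refine ⟨fun n => j n (P n), fun n => ?_⟩
  suffices h : {x | ∀ i < n, x i ≤ j i (P i)} = (P n).1 by
    rw [h]
    exact (P n).2
  induction n with
  | zero => simp [P]
  | succ n ih =>
    change _ = (P n).1 ∩ {x | x n ≤ j n (P n)}
    rw [← ih]
    ext x
    simp only [mem_inter_iff, mem_ofPred, Nat.forall_lt_succ_right]

theorem exists_subset_of_forall_le_subset {k : ℕ → ℕ} {W : Set (ℕ → ℕ)} (hW : IsOpen W)
    (hk : {x | ∀ i, x i ≤ k i} ⊆ W) : ∃ n, {x | ∀ i < n, x i ≤ k i} ⊆ W := by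
  by_contra! h
  simp only [not_subset] at h
  choose z hz hzW using h
  have hL : IsCompact {x : ℕ → ℕ | ∀ i, x i ∈ Iic (k i)} :=
    isCompact_pi_infinite fun i => (finite_Iic (k i)).isCompact
  obtain ⟨a, haL, φ, hφ, ha⟩ := hL.tendsto_subseq (x := fun n i => min (z n i) (k i))
    fun n i => mem_Iic.2 (min_le_right _ _)
  have hza : Tendsto (z ∘ φ) atTop (𝓝 a) := by
    rw [tendsto_pi_nhds] at ha ⊢
    refine fun i => (ha i).congr' ?_
    filter_upwards [eventually_gt_atTop i] with n hn
    exact min_eq_left (hz _ i (hn.trans_le (hφ.id_le n)))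
  exact hW.isClosed_compl.mem_of_tendsto hza (Eventually.of_forall fun n => hzW _) (hk haL)

theorem MeasureTheory.AnalyticSet.exists_isCompact_subset_le {X : Type*} [TopologicalSpace X]
    [MeasurableSpace X] {μ : Measure X} [μ.OuterRegular] {s : Set X} (hs : AnalyticSet s)
    {c : ℝ≥0∞} (hc : c < μ s) : ∃ K ⊆ s, IsCompact K ∧ c ≤ μ K := by
  rw [AnalyticSet] at hs
  obtain rfl | ⟨f, hf, rfl⟩ := hs
  · simp at hc
  obtain ⟨k, hk⟩ := exists_bound_measure_image_lt μ f hc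
  refine ⟨f '' {x | ∀ i, x i ≤ k i}, image_subset_range _ _, IsCompact.image
    (isCompact_pi_infinite fun i => (finite_Iic (k i)).isCompact) hf, ?_⟩
  rw [Set.measure_eq_iInf_isOpen]
  refine le_iInf₂ fun W hW => le_iInf fun hWo => ?_
  obtain ⟨n, hn⟩ := exists_subset_of_forall_le_subset (hWo.preimage hf) (image_subset_iff.1 hW)
  exact (hk n).le.trans (measure_mono (image_subset_iff.2 hn))

/-- Analytic sets are universally measurable. -/
theorem MeasureTheory.AnalyticSet.nullMeasurableSet {X : Type*} [TopologicalSpace X] [T2Space X]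
    [MeasurableSpace X] [OpensMeasurableSpace X] {μ : Measure X} [IsFiniteMeasure μ]
    [μ.OuterRegular] {s : Set X} (hs : AnalyticSet s) : NullMeasurableSet s μ := by
  rcases eq_or_ne (μ s) 0 with h0 | h0
  · exact NullMeasurableSet.of_null h0
  obtain ⟨c, -, hc, hclim⟩ := exists_seq_strictMono_tendsto' (pos_iff_ne_zero.2 h0)
  choose K hKs hK hcK using fun n => hs.exists_isCompact_subset_le (hc n).2
  have hm : MeasurableSet (⋃ n, K n) := .iUnion fun n => (hK n).measurableSet
  refine hm.nullMeasurableSet.congr (ae_eq_of_subset_of_measure_ge (iUnion_subset hKs) ?_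
    hm.nullMeasurableSet (measure_ne_top _ _))
  exact le_of_tendsto' hclim fun n => (hcK n).trans (measure_mono (subset_iUnion K n))

theorem MeasurableSet.nullMeasurableSet_image {X Y : Type*} [MeasurableSpace X]
    [StandardBorelSpace X] [MeasurableSpace Y] [StandardBorelSpace Y] {μ : Measure X}
    [IsFiniteMeasure μ] {p : Y → X} (hp : Measurable p) {s : Set Y} (hs : MeasurableSet s) :
    NullMeasurableSet (p '' s) μ := by
  let := upgradeStandardBorel X
  exact (hs.analyticSet_image hp).nullMeasurableSet

theorem exists_measurable_nat_forall_mem {X : Type*} [MeasurableSpace X] {B : ℕ → Set X}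
    (hB : ∀ k, MeasurableSet (B k)) :
    ∃ g : X → ℕ, Measurable g ∧ ∀ x k, x ∈ B k → x ∈ B (g x) := by
  classical
  have hex (x : X) : ∃ k, x ∈ B k ∨ ∀ j, x ∉ B j := by
    by_cases h : ∃ k, x ∈ B k
    · exact h.imp fun k hk => Or.inl hk
    · exact ⟨0, Or.inr (not_exists.1 h)⟩
  refine ⟨fun x => Nat.find (hex x), measurable_find hex fun k => ?_, fun x k hk =>
    (Nat.find_spec (hex x)).resolve_right fun h => h k hk⟩
  have : {x | x ∈ B k ∨ ∀ j, x ∉ B j} = B k ∪ ⋂ j, (B j)ᶜ := by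
    ext x
    simp
  rw [this]
  exact (hB k).union (.iInter fun j => (hB j).compl)

/-- A measurable selection theorem: the selection is the greedy branch through the tree of
finite sequences whose cylinder meets the fiber. -/
theorem exists_measurable_ae_rightInverse_baire {X : Type*} [MeasurableSpace X]
    [StandardBorelSpace X] {μ : Measure X} [IsFiniteMeasure μ] {f : (ℕ → ℕ) → X}
    (hf : Measurable f) (hrange : ∀ᵐ x ∂μ, x ∈ range f)
    (hclosed : ∀ᵐ x ∂μ, IsClosed (f ⁻¹' {x})) :
    ∃ s : X → ℕ → ℕ, Measurable s ∧ ∀ᵐ x ∂μ, f (s x) = x := by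
  let A (σ : List ℕ) : Set X := f '' {z | PiNat.res z σ.length = σ}
  have hA (σ : List ℕ) : NullMeasurableSet (A σ) μ := by
    refine MeasurableSet.nullMeasurableSet_image hf (IsOpen.measurableSet ?_)
    rw [isOpen_iff_mem_nhds]
    intro z hz
    refine mem_of_superset ((PiNat.isOpen_cylinder (fun _ => ℕ) z σ.length).mem_nhds
      (PiNat.self_mem_cylinder z _)) fun w hw => ?_
    rw [PiNat.cylinder_eq_res, mem_ofPred] at hw
    exact mem_ofPred.2 (hw.trans hz)
  choose B hBm hAB using hA
  choose g hgm hg using fun σ : List ℕ => exists_measurable_nat_forall_mem fun k => hBm (k :: σ)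
  let pre (x : X) : ℕ → List ℕ := Nat.rec [] fun _ σ => g σ x :: σ
  let s (x : X) (n : ℕ) : ℕ := g (pre x n) x
  have hres (x : X) (n : ℕ) : PiNat.res (s x) n = pre x n := by
    induction n with
    | zero => rfl
    | succ n ih => rw [PiNat.res_succ, ih]
  let : MeasurableSpace (List ℕ) := ⊤
  have : DiscreteMeasurableSpace (List ℕ) := ⟨fun _ => trivial⟩
  have hgm' : Measurable fun q : List ℕ × X => g q.1 q.2 := measurable_from_prod_countable_right hgm
  have hpre (n : ℕ) : Measurable fun x => pre x n := by
    induction n with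
    | zero => exact measurable_const
    | succ n ih =>
      exact (Measurable.of_discrete (f := fun q : ℕ × List ℕ => q.1 :: q.2)).comp
        ((hgm'.comp (ih.prodMk measurable_id)).prodMk ih)
  refine ⟨s, measurable_pi_lambda _ fun n => hgm'.comp ((hpre n).prodMk measurable_id), ?_⟩
  have hAB' : ∀ᵐ x ∂μ, ∀ σ, x ∈ A σ ↔ x ∈ B σ := ae_all_iff.2 fun σ => (hAB σ).mem_iff
  filter_upwards [hrange, hclosed, hAB'] with x hx hxc hxAB
  have hmem (n : ℕ) : x ∈ A (pre x n) := by
    induction n with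
    | zero =>
      obtain ⟨z, rfl⟩ := hx
      exact ⟨z, rfl, rfl⟩
    | succ n ih =>
      obtain ⟨w, hw, hwx⟩ := ih
      have hlen : (pre x n).length = n := by rw [← hres, PiNat.res_length]
      rw [mem_ofPred, hlen] at hw
      rw [hxAB]
      refine hg _ _ (w n) ((hxAB _).1 ⟨w, ?_, hwx⟩)
      rw [mem_ofPred, List.length_cons, hlen, PiNat.res_succ, hw]
  choose w hw hwx using hmem
  have hlim : Tendsto w atTop (𝓝 (s x)) := by
    rw [tendsto_pi_nhds]
    refine fun i => tendsto_const_nhds.congr' ?_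
    filter_upwards [eventually_gt_atTop i] with n hn
    have h := hw n
    rw [mem_ofPred, ← hres, PiNat.res_length, PiNat.res_eq_res] at h
    exact (h hn).symm
  exact hxc.mem_of_tendsto hlim (Eventually.of_forall hwx)

theorem exists_measurable_ae_rightInverse {X Y : Type*} [MeasurableSpace X]
    [StandardBorelSpace X] [TopologicalSpace Y] [PolishSpace Y] [MeasurableSpace Y] [BorelSpace Y]
    {μ : Measure X} [IsFiniteMeasure μ] [Nonempty Y] {p : Y → X} (hp : Measurable p)
    (hrange : ∀ᵐ x ∂μ, x ∈ range p) (hclosed : ∀ᵐ x ∂μ, IsClosed (p ⁻¹' {x})) :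
    ∃ s : X → Y, Measurable s ∧ ∀ᵐ x ∂μ, p (s x) = x := by
  obtain ⟨q, hq, hqs⟩ := PolishSpace.exists_nat_nat_continuous_surjective Y
  obtain ⟨s, hs, hps⟩ := exists_measurable_ae_rightInverse_baire (μ := μ) (hp.comp hq.measurable)
    (by rwa [hqs.range_comp]) (hclosed.mono fun x hx => hx.preimage hq)
  exact ⟨q ∘ s, hq.measurable.comp hs, hps⟩

/-- If almost all fibers of `p` are compact, then every measurable set is approximated from inside,
in measure, by sets with compact preimage. -/
theorem exists_measurableSet_isCompact_preimage {X Y : Type*} [MeasurableSpace X]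
    [StandardBorelSpace X] [TopologicalSpace Y] [PolishSpace Y] [MeasurableSpace Y] [BorelSpace Y]
    {μ : Measure X} [IsFiniteMeasure μ] {p : Y → X} (hp : Measurable p)
    (hfib : ∀ᵐ x ∂μ, IsCompact (p ⁻¹' {x})) {A : Set X} (hA : MeasurableSet A)
    {r : ℝ≥0∞} (hr : r < μ A) :
    ∃ F ⊆ A, MeasurableSet F ∧ r < μ F ∧ IsCompact (p ⁻¹' F) := by
  let := upgradeStandardBorel X
  let b := TopologicalSpace.countableBasis Y
  let U (t : Finset b) : Set Y := ⋃ V ∈ t, (V : Set Y)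
  have hU (t : Finset b) : IsOpen (U t) := isOpen_biUnion fun V _ =>
    TopologicalSpace.isOpen_of_mem_countableBasis V.2
  let E (t : Finset b) : Set X := (p '' (U t)ᶜ)ᶜ
  have hE (t : Finset b) : NullMeasurableSet (E t) μ :=
    (MeasurableSet.nullMeasurableSet_image hp (hU t).measurableSet.compl).compl
  have : Countable b := (TopologicalSpace.countable_countableBasis Y).to_subtype
  obtain ⟨δ, hδ, hδsum⟩ := ENNReal.exists_pos_sum_of_countable' (tsub_pos_of_lt hr).ne' (Finset b)
  choose O hEO hO hμO using fun t =>
    Set.exists_isOpen_lt_add (E t) (measure_ne_top μ _) (hδ t).ne'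
  let N : Set X := {x | ¬ IsCompact (p ⁻¹' {x})} ∪ ⋃ t, O t \ E t
  have hN : μ N < μ A - r := by
    calc μ N ≤ μ {x | ¬ IsCompact (p ⁻¹' {x})} + ∑' t, μ (O t \ E t) :=
          (measure_union_le _ _).trans (add_le_add_right (measure_iUnion_le _) _)
      _ ≤ ∑' t, δ t := by
          rw [ae_iff.1 hfib, zero_add]
          refine ENNReal.tsum_le_tsum fun t => ?_
          rw [measure_sdiff (hEO t) (hE t) (measure_ne_top _ _)]
          exact tsub_le_iff_left.2 (hμO t).le
      _ < μ A - r := hδsum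
  have hG : r < μ (A \ toMeasurable μ N) := by
    refine lt_of_lt_of_le ?_ le_measure_sdiff
    rw [measure_toMeasurable]
    exact lt_tsub_comm.1 hN
  obtain ⟨F, hFG, hF, hrF⟩ :=
    (hA.diff (measurableSet_toMeasurable μ N)).exists_lt_isCompact_of_ne_top
      (measure_ne_top _ _) hG
  refine ⟨F, fun x hx => (hFG hx).1, hF.measurableSet, hrF, ?_⟩
  have hFN {x : X} (hx : x ∈ F) : x ∉ N := fun h => (hFG hx).2 (subset_toMeasurable μ N h)
  rw [isCompact_iff_ultrafilter_le_nhds]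
  intro φ hφ
  obtain ⟨x, hxF, hx⟩ := isCompact_iff_ultrafilter_le_nhds.1 hF (φ.map p)
    (le_principal_iff.2 (Ultrafilter.mem_map.2 (le_principal_iff.1 hφ)))
  have hxc : IsCompact (p ⁻¹' {x}) := by
    by_contra h
    exact hFN hxF (Or.inl h)
  by_contra! hlim
  have hV (y : p ⁻¹' {x}) : ∃ V : b, (y : Y) ∈ (V : Set Y) ∧ (V : Set Y) ∉ φ := by
    have hy := hlim y (by simpa [mem_singleton_iff.1 y.2] using hxF)
    rw [(TopologicalSpace.isBasis_countableBasis Y).nhds_hasBasis.ge_iff] at hy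
    push Not at hy
    obtain ⟨V, ⟨hVb, hyV⟩, hVφ⟩ := hy
    exact ⟨⟨V, hVb⟩, hyV, hVφ⟩
  choose V hyV hVφ using hV
  classical
  obtain ⟨t, ht⟩ := hxc.elim_finite_subcover (fun y => (V y : Set Y))
    (fun y => TopologicalSpace.isOpen_of_mem_countableBasis (V y).2)
    fun y hy => mem_iUnion.2 ⟨⟨y, hy⟩, hyV ⟨y, hy⟩⟩
  have htU : ⋃ y ∈ t, (V y : Set Y) = U (t.image V) :=
    (Finset.set_biUnion_finset_image (g := fun W : b => (W : Set Y))).symm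
  have hUφ : U (t.image V) ∉ φ := by
    rw [← htU]
    intro h
    obtain ⟨y, -, hy⟩ := (Ultrafilter.finite_biUnion_mem_iff t.finite_toSet).1 h
    exact hVφ y hy
  have hxE : x ∈ E (t.image V) := by
    rintro ⟨y, hy, hyx⟩
    exact hy (htU ▸ ht hyx)
  have hOφ : p ⁻¹' O (t.image V) ∈ φ := hx ((hO _).mem_nhds (hEO _ hxE))
  refine hUφ (mem_of_superset (inter_mem hOφ (le_principal_iff.1 hφ)) ?_)
  rintro y ⟨hyO, hyF⟩
  by_contra hyU
  exact hFN hyF (Or.inr (mem_iUnion.2 ⟨_, hyO, fun h => h ⟨y, hyU, rfl⟩⟩))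

theorem isTightMeasureSet_lifts {X Y : Type*} [MeasurableSpace X]
    [StandardBorelSpace X] [TopologicalSpace Y] [PolishSpace Y] [MeasurableSpace Y] [BorelSpace Y]
    {μ : Measure X} [IsProbabilityMeasure μ] {p : Y → X} (hp : Measurable p)
    (hfib : ∀ᵐ x ∂μ, IsCompact (p ⁻¹' {x})) : IsTightMeasureSet {ν : Measure Y | ν.map p = μ} := by
  rw [isTightMeasureSet_iff_exists_isCompact_measure_compl_le]
  intro ε hε
  obtain ⟨F, -, hF, hεF, hK⟩ := exists_measurableSet_isCompact_preimage hp hfib .univ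
    (r := 1 - ε) (by simpa using ENNReal.sub_lt_self ENNReal.one_ne_top one_ne_zero hε.ne')
  refine ⟨p ⁻¹' F, hK, fun ν hν => ?_⟩
  rw [← preimage_compl, ← Measure.map_apply hp hF.compl, mem_ofPred.1 hν,
    prob_compl_eq_one_sub hF, tsub_le_iff_left]
  exact tsub_le_iff_right.1 hεF.le

/-- If almost all fibers of `p` are compact, then the lifts of `μ` along `p` are closed under weak
limits, although `p` need not be continuous. -/
theorem map_eq_of_tendsto_of_map_eq {X Y ι : Type*} [MeasurableSpace X]
    [StandardBorelSpace X] [TopologicalSpace Y] [PolishSpace Y] [MeasurableSpace Y] [BorelSpace Y]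
    {μ : Measure X} [IsProbabilityMeasure μ] {p : Y → X} (hp : Measurable p)
    (hfib : ∀ᵐ x ∂μ, IsCompact (p ⁻¹' {x})) {l : Filter ι} [l.NeBot]
    {ν : ι → ProbabilityMeasure Y} {ν₀ : ProbabilityMeasure Y} (hlim : Tendsto ν l (𝓝 ν₀))
    (hν : ∀ i, (ν i : Measure Y).map p = μ) : (ν₀ : Measure Y).map p = μ := by
  have : IsProbabilityMeasure ((ν₀ : Measure Y).map p) :=
    Measure.isProbabilityMeasure_map hp.aemeasurable
  refine (Measure.eq_of_le_of_measure_univ_eq (Measure.le_iff.2 fun A hA => ?_) (by simp)).symm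
  refine le_of_forall_lt fun r hr => ?_
  obtain ⟨F, hFA, hF, hrF, hK⟩ := exists_measurableSet_isCompact_preimage hp hfib hA hr
  refine hrF.trans_le ?_
  calc μ F = l.limsup fun i => (ν i : Measure Y) (p ⁻¹' F) := by
        simp_rw [← Measure.map_apply hp hF, hν, limsup_const]
    _ ≤ (ν₀ : Measure Y) (p ⁻¹' F) :=
        ProbabilityMeasure.limsup_measure_closed_le_of_tendsto hlim hK.isClosed
    _ ≤ (ν₀ : Measure Y).map p A := by
        rw [Measure.map_apply hp hA]
        exact measure_mono (preimage_mono hFA)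

/-- The average of the first `n + 1` push-forwards of `ν` under the iterates of `S`. -/
noncomputable def orbitAverage {Y : Type*} [MeasurableSpace Y] (S : Y → Y) (ν : Measure Y)
    (n : ℕ) : Measure Y :=
  ((n : ℝ≥0∞) + 1)⁻¹ • ∑ k ∈ Finset.range (n + 1), ν.map S^[k]

theorem map_orbitAverage_of_map_iterate_eq {X Y : Type*} [MeasurableSpace X] [MeasurableSpace Y]
    {μ : Measure X} {S : Y → Y} {ν : Measure Y} {p : Y → X} (hp : Measurable p)
    (hν : ∀ k, (ν.map S^[k]).map p = μ) (n : ℕ) : (orbitAverage S ν n).map p = μ := by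
  rw [orbitAverage, Measure.map_smul, ← Measure.mapₗ_apply_of_measurable hp, map_sum]
  simp_rw [Measure.mapₗ_apply_of_measurable hp, hν]
  rw [Finset.sum_const, Finset.card_range, ← Nat.cast_smul_eq_nsmul ℝ≥0∞, smul_smul]
  push_cast
  rw [ENNReal.inv_mul_cancel (by simp) (by finiteness), one_smul]

theorem integral_orbitAverage {Y : Type*} [TopologicalSpace Y] [MeasurableSpace Y] [BorelSpace Y]
    {S : Y → Y} (hS : Continuous S) {ν : Measure Y} [IsFiniteMeasure ν] (n : ℕ)
    (f : BoundedContinuousFunction Y ℝ) :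
    ∫ y, f y ∂orbitAverage S ν n =
      ((n : ℝ) + 1)⁻¹ * ∑ k ∈ Finset.range (n + 1), ∫ y, f (S^[k] y) ∂ν := by
  rw [orbitAverage, integral_smul_measure, integral_finsetSum_measure
    fun k _ => f.integrable _]
  congr 1
  · simp [ENNReal.toReal_add]
  · refine Finset.sum_congr rfl fun k _ => ?_
    exact integral_map (hS.iterate k).aemeasurable f.continuous.aestronglyMeasurable

theorem map_eq_self_of_tendsto_orbitAverage {Y : Type*} [TopologicalSpace Y] [PolishSpace Y]
    [MeasurableSpace Y] [BorelSpace Y] {S : Y → Y} (hS : Continuous S) {ν : Measure Y}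
    [IsProbabilityMeasure ν] {ρ : ℕ → ProbabilityMeasure Y}
    (hρ : ∀ n, (ρ n : Measure Y) = orbitAverage S ν n) {l : Filter ℕ} [l.NeBot] (hl : l ≤ atTop)
    {ρ₀ : ProbabilityMeasure Y} (hlim : Tendsto ρ l (𝓝 ρ₀)) :
    (ρ₀ : Measure Y).map S = ρ₀ := by
  have : IsProbabilityMeasure ((ρ₀ : Measure Y).map S) :=
    Measure.isProbabilityMeasure_map hS.aemeasurable
  refine ext_of_forall_integral_eq_of_IsFiniteMeasure fun f => ?_
  rw [integral_map hS.aemeasurable f.continuous.aestronglyMeasurable]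
  have hconv (g : BoundedContinuousFunction Y ℝ) :=
    ProbabilityMeasure.tendsto_iff_forall_integral_tendsto.1 hlim g
  have hdiff (n : ℕ) : ∫ y, f (S y) ∂(ρ n : Measure Y) - ∫ y, f y ∂(ρ n : Measure Y) =
      ((n : ℝ) + 1)⁻¹ * (∫ y, f (S^[n + 1] y) ∂ν - ∫ y, f y ∂ν) := by
    have h := integral_orbitAverage hS (ν := ν) n (f.compContinuous ⟨S, hS⟩)
    simp only [BoundedContinuousFunction.compContinuous_apply, ContinuousMap.coe_mk,
      ← Function.iterate_succ_apply' S] at h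
    rw [hρ, h, integral_orbitAverage hS, ← mul_sub, ← Finset.sum_sub_distrib,
      Finset.sum_range_sub (fun k => ∫ y, f (S^[k] y) ∂ν)]
    rfl
  have hbound (k : ℕ) : ‖∫ y, f (S^[k] y) ∂ν‖ ≤ ‖f‖ := by
    simpa using norm_integral_le_of_norm_le_const (μ := ν) (f := fun y => f (S^[k] y))
      (.of_forall fun y => f.norm_coe_le_norm _)
  have hzero : Tendsto (fun n => ∫ y, f (S y) ∂(ρ n : Measure Y) - ∫ y, f y ∂(ρ n : Measure Y))
      l (𝓝 0) := by
    simp_rw [hdiff]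
    have hinv : Tendsto (fun n : ℕ => ((n : ℝ) + 1)⁻¹) atTop (𝓝 0) := by
      simpa using tendsto_one_div_add_atTop_nhds_zero_nat (𝕜 := ℝ)
    refine (hinv.zero_mul_isBoundedUnder_le ?_).mono_left hl
    refine isBoundedUnder_of ⟨‖f‖ + ‖f‖, fun n => ?_⟩
    exact (norm_sub_le _ _).trans (add_le_add (hbound _) (hbound 0))
  exact sub_eq_zero.1 (tendsto_nhds_unique
    ((hconv (f.compContinuous ⟨S, hS⟩)).sub (hconv f)) hzero)

/-- **Theorem 1.1.** Let `X` be a standard Borel space with a Borel probability measure `μ`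
and `T : X → X` a measurable map preserving `μ`. Let `Y` be a Polish space, `S : Y → Y`
continuous, and `p : Y → X` Borel with `p ∘ S = T ∘ p` and `μ (p '' univ) = 1`. If the fiber
`p ⁻¹' {x}` is compact for `μ`-a.e. `x`, then `μ` lifts to an `S`-invariant Borel probability
measure `ν` on `Y`, i.e. `ν.map S = ν` and `ν.map p = μ`. -/
theorem lift_invariant_measure_of_compact_fibers
    {X : Type*} [MeasurableSpace X] [StandardBorelSpace X]
    (μ : Measure X) [IsProbabilityMeasure μ]
    {Y : Type*} [TopologicalSpace Y] [PolishSpace Y] [MeasurableSpace Y] [BorelSpace Y]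
    (T : X → X) (hT : Measurable T) (hTμ : μ.map T = μ)
    (S : Y → Y) (hS : Continuous S)
    (p : Y → X) (hp : Measurable p)
    (hcomm : p ∘ S = T ∘ p)
    (hfull : μ (Set.range p) = 1)
    (hfib : ∀ᵐ x ∂μ, IsCompact (p ⁻¹' {x})) :
    ∃ ν : Measure Y, IsProbabilityMeasure ν ∧ ν.map S = ν ∧ ν.map p = μ := by
  have hrange : ∀ᵐ x ∂μ, x ∈ Set.range p := by
    rw [← Set.image_univ] at hfull ⊢
    exact (prob_compl_eq_zero_iff₀ (MeasurableSet.univ.nullMeasurableSet_image hp)).2 hfull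
  have : Nonempty Y := by
    rw [← Set.range_nonempty_iff_nonempty (f := p)]
    exact nonempty_of_measure_ne_zero (hfull ▸ one_ne_zero)
  obtain ⟨s, hs, hps⟩ := exists_measurable_ae_rightInverse hp hrange
    (hfib.mono fun x hx => hx.isClosed)
  have hlift : (μ.map s).map p = μ := by
    rw [Measure.map_map hp hs]
    exact (Measure.map_congr hps).trans Measure.map_id
  have hiter (k : ℕ) : ((μ.map s).map S^[k]).map p = μ := by
    have hsemi : Function.Semiconj p S T := congrFun hcomm
    rw [Measure.map_map hp (hS.iterate k).measurable, (hsemi.iterate_right k).comp_eq,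
      ← Measure.map_map (hT.iterate k) hp, hlift]
    exact (MeasurePreserving.iterate ⟨hT, hTμ⟩ k).map_eq
  have : IsProbabilityMeasure (μ.map s) := Measure.isProbabilityMeasure_map hs.aemeasurable
  have havg := map_orbitAverage_of_map_iterate_eq hp hiter
  have hprob (n : ℕ) : IsProbabilityMeasure (orbitAverage S (μ.map s) n) :=
    (Measure.isProbabilityMeasure_map_iff hp.aemeasurable).1 (by rwa [havg n])
  let ρ (n : ℕ) : ProbabilityMeasure Y := ⟨orbitAverage S (μ.map s) n, hprob n⟩
  have hcompact : IsCompact (closure (range ρ)) :=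
    isCompact_closure_of_isTightMeasureSet ((isTightMeasureSet_lifts hp hfib).subset (by
      rintro _ ⟨_, ⟨n, rfl⟩, rfl⟩
      exact havg n))
  obtain ⟨ρ₀, -, hρ₀⟩ := isCompact_iff_ultrafilter_le_nhds.1 hcompact ((hyperfilter ℕ).map ρ)
    (le_principal_iff.2 (Ultrafilter.mem_map.2 (univ_mem' fun n => subset_closure ⟨n, rfl⟩)))
  have hlim : Tendsto ρ (hyperfilter ℕ) (𝓝 ρ₀) := hρ₀
  exact ⟨ρ₀, inferInstance,
    map_eq_self_of_tendsto_orbitAverage hS (fun n => rfl) Nat.hyperfilter_le_atTop hlim,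
    map_eq_of_tendsto_of_map_eq hp hfib hlim havg⟩
end

section
/- Let $X$ be a standard Borel space with a Borel probability measure $\mu$, let $Y$ be a compact metrizable space, and let $p: Y \to X$ be a Borel map such that $\mu(p(Y)) = 1$ and such that $p^{-1}(x)$ is compact for $\mu$-almost all $x \in X$. Suppose $\nu_1, \nu_2, \nu_3, \ldots$ is a sequence of Borel probability measures on $Y$ with $p_*\nu_n = \mu$ for all $n$, converging in the weak* topology to a Borel probability measure $\nu$. Then for every Borel set $A \subset X$ one has $p_*\nu(A) \ge \mu(A)$. -/
open MeasureTheory Filter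

/-- A countable family of measurable sets in a standard Borel space is simultaneously closed
for some compatible Polish topology. -/
theorem exists_polishSpace_forall_isClosed {X ι : Type*} [Countable ι] [m : MeasurableSpace X]
    [StandardBorelSpace X] {s : ι → Set X} (hs : ∀ i, MeasurableSet (s i)) :
    ∃ t : TopologicalSpace X, @PolishSpace X t ∧ @BorelSpace X t m ∧ ∀ i, @IsClosed X t (s i) := by
  obtain ⟨t₀, hb, hpol⟩ := StandardBorelSpace.polish (α := X)
  choose τ hτle hτ hclosed _ using fun i ↦ (hs i).isClopenable
  obtain ⟨t, htτ, ht₀, ht⟩ := PolishSpace.exists_polishSpace_forall_le τ hτle hτ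
  refine ⟨t, ht, @BorelSpace.mk X t m ?_, fun i ↦ (hclosed i).mono (htτ i)⟩
  rw [hb.measurable_eq, borel_eq_borel_of_le ht hpol ht₀]

/-- The image of a measurable set under a measurable map between standard Borel spaces contains
a measurable set whose preimage covers almost all of the original set. -/
theorem exists_measurableSet_subset_image_measure_diff_preimage_eq_zero
    {X Y : Type*} [MeasurableSpace X] [StandardBorelSpace X] [m : MeasurableSpace Y]
    [StandardBorelSpace Y] {p : Y → X} (hp : Measurable p) (ν : Measure Y) [IsFiniteMeasure ν]
    {U : Set Y} (hU : MeasurableSet U) :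
    ∃ S ⊆ p '' U, MeasurableSet S ∧ ν (U \ p ⁻¹' S) = 0 := by
  obtain ⟨tX, _, _⟩ := StandardBorelSpace.polish (α := X)
  obtain ⟨t₀, hb, hpol⟩ := StandardBorelSpace.polish (α := Y)
  obtain ⟨t, hle, hcont, ht⟩ := hp.exists_continuous
  have hbt : @BorelSpace Y t m := @BorelSpace.mk Y t m <| by
    rw [hb.measurable_eq, borel_eq_borel_of_le ht hpol hle]
  clear hle hb hpol t₀
  have hK (k : ℕ) : ∃ K ⊆ U, IsCompact K ∧ ν (U \ K) < ((k : ENNReal) + 1)⁻¹ :=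
    hU.exists_isCompact_sdiff_lt (measure_ne_top _ _) (by simp)
  choose K hKU hK hKlt using hK
  refine ⟨⋃ k, p '' K k, Set.iUnion_subset fun k ↦ Set.image_mono (hKU k),
    .iUnion fun k ↦ ((hK k).image hcont).isClosed.measurableSet, ?_⟩
  have hle (k : ℕ) : ν (U \ p ⁻¹' ⋃ k, p '' K k) ≤ ((k : ENNReal) + 1)⁻¹ := by
    refine le_trans (measure_mono fun y hy ↦ ?_) (hKlt k).le
    exact ⟨hy.1, fun hyK ↦ hy.2 (Set.mem_iUnion.2 ⟨k, y, hyK, rfl⟩)⟩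
  have hlim : Tendsto (fun k : ℕ ↦ ((k : ENNReal) + 1)⁻¹) atTop (nhds 0) := by
    simpa using (tendsto_add_atTop_iff_nat 1).2 ENNReal.tendsto_inv_nat_nhds_zero
  exact le_antisymm (ge_of_tendsto' hlim hle) bot_le

/-- If the sets `S U`, for `U` in a basis of `Y`, are closed with `S U ⊆ p '' U`, then over a
compact set of points with closed fibers the points `y` satisfying `p y ∈ S U` for all basic
neighborhoods `U` form a closed set. -/
theorem isClosed_setOf_forall_basis_inter_preimage {X Y : Type*} [TopologicalSpace X]
    [TopologicalSpace Y] {p : Y → X} {b : Set (Set Y)}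
    (hb : TopologicalSpace.IsTopologicalBasis b) {S : b → Set X} (hS : ∀ U, IsClosed (S U))
    (hSU : ∀ U : b, S U ⊆ p '' U) {K : Set X} (hK : IsCompact K)
    (hfib : ∀ x ∈ K, IsClosed (p ⁻¹' {x})) :
    IsClosed ({y | ∀ U : b, y ∈ (U : Set Y) → p y ∈ S U} ∩ p ⁻¹' K) := by
  refine isClosed_of_closure_subset fun y hy ↦ ?_
  obtain ⟨u, hu, huy⟩ := mem_closure_iff_ultrafilter.1 hy
  obtain ⟨x, hxK, hx⟩ := hK.ultrafilter_le_nhds (u.map p)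
    (le_principal_iff.2 (mem_map.2 (mem_of_superset hu Set.inter_subset_right)))
  have hxS (U : b) (hyU : y ∈ (U : Set Y)) : x ∈ S U := by
    refine (hS U).mem_of_tendsto hx ?_
    filter_upwards [hu, huy ((hb.isOpen U.2).mem_nhds hyU)] with z hz hzU using hz.1 U hzU
  have hpy : p y = x := by
    by_contra hne
    obtain ⟨U, hUb, hyU, hUsub⟩ :=
      hb.exists_subset_of_mem_open (show y ∈ (p ⁻¹' {x})ᶜ from hne) (hfib x hxK).isOpen_compl
    obtain ⟨z, hzU, hz⟩ := hSU ⟨U, hUb⟩ (hxS ⟨U, hUb⟩ hyU)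
    exact hUsub hzU hz
  subst hpy
  exact ⟨hxS, hxK⟩

/-- Claim 1 in the proof of Lemma 3.1: with `Y` compact metrizable, `X` standard Borel with
Borel probability measure `μ`, `p : Y → X` Borel with `μ (range p) = 1` and `μ`-a.e. compact
fibers, if `ν n` are Borel probability measures on `Y` with `p_* (ν n) = μ` converging weakly
to `νlim`, then `p_* νlim (A) ≥ μ (A)` for every Borel set `A ⊆ X`. -/
theorem map_limit_ge_of_map_eq
    {X : Type*} [MeasurableSpace X] [StandardBorelSpace X]
    (μ : Measure X) [IsProbabilityMeasure μ]
    {Y : Type*} [TopologicalSpace Y] [CompactSpace Y] [TopologicalSpace.MetrizableSpace Y]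
    [MeasurableSpace Y] [BorelSpace Y]
    (p : Y → X) (hp : Measurable p)
    (hfull : μ (Set.range p) = 1)
    (hfib : ∀ᵐ x ∂μ, IsCompact (p ⁻¹' {x}))
    (ν : ℕ → ProbabilityMeasure Y) (hν : ∀ n, (ν n).toMeasure.map p = μ)
    (νlim : ProbabilityMeasure Y) (hlim : Tendsto ν atTop (nhds νlim)) :
    ∀ A : Set X, MeasurableSet A → μ A ≤ (νlim.toMeasure.map p) A := by
  intro A hA
  let := TopologicalSpace.metrizableSpaceMetric Y
  let b := TopologicalSpace.countableBasis Y
  have hb : TopologicalSpace.IsTopologicalBasis b := TopologicalSpace.isBasis_countableBasis Y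
  have : Countable b := (TopologicalSpace.countable_countableBasis Y).to_subtype
  choose T hTU hT hTν using fun (U : b) (n : ℕ) ↦
    exists_measurableSet_subset_image_measure_diff_preimage_eq_zero hp (ν n).toMeasure
      (hb.isOpen U.2).measurableSet
  let S (U : b) : Set X := ⋃ n, T U n
  have hS (U : b) : MeasurableSet (S U) := .iUnion (hT U)
  obtain ⟨t, _, _, hSclosed⟩ := exists_polishSpace_forall_isClosed hS
  let G : Set Y := {y | ∀ U : b, y ∈ (U : Set Y) → p y ∈ S U}
  have hG (n : ℕ) : ∀ᵐ y ∂(ν n).toMeasure, y ∈ G := by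
    refine ae_all_iff.2 fun U ↦ ?_
    refine measure_mono_null (fun y hy ↦ ?_) (hTν U n)
    obtain ⟨hyU, hyS⟩ := Classical.not_imp.1 hy
    exact ⟨hyU, fun hyT ↦ hyS (Set.mem_iUnion.2 ⟨n, hyT⟩)⟩
  obtain ⟨N, hN, hNmeas, hN0⟩ := exists_measurable_superset_of_null (ae_iff.1 hfib)
  rw [← measure_sdiff_null (s := A) hN0, (hA.diff hNmeas).measure_eq_iSup_isCompact]
  refine iSup₂_le fun K hKA ↦ iSup_le fun hK ↦ ?_
  have hclosed : IsClosed (G ∩ p ⁻¹' K) :=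
    isClosed_setOf_forall_basis_inter_preimage hb hSclosed
      (fun U ↦ Set.iUnion_subset (hTU U)) hK
      fun x hx ↦ (not_not.1 fun h ↦ (hKA hx).2 (hN h) : IsCompact (p ⁻¹' {x})).isClosed
  have hmeas (n : ℕ) : (ν n).toMeasure (G ∩ p ⁻¹' K) = μ K := by
    rw [Set.inter_comm, measure_inter_conull (t := G) (hG n), ← hν n,
      Measure.map_apply hp hK.isClosed.measurableSet]
  calc μ K = limsup (fun n ↦ (ν n).toMeasure (G ∩ p ⁻¹' K)) atTop := by simp [hmeas]
    _ ≤ νlim.toMeasure (G ∩ p ⁻¹' K) :=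
      ProbabilityMeasure.limsup_measure_closed_le_of_tendsto hlim hclosed
    _ ≤ νlim.toMeasure (p ⁻¹' A) := measure_mono fun y hy ↦ (hKA hy.2).1
    _ = (νlim.toMeasure.map p) A := (Measure.map_apply hp hA).symm
end
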